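/- Let φ(x) be a formula of the correspondence language with at most the free variable x. Then φ(x) is logically equivalent to the (2,2)-standard x-translation ST_22(I,x) of some modal intuitionistic formula I if and only if there exists k ∈ ℕ such that φ(x) is invariant with respect to (2,2)-modal k-asimulations. -/

import Mathlib

namespace ModalIntAsim

/-- Binary relation symbols of the correspondence vocabulary: R, R_□, R_◇. -/
inductive RelSym : Type
  | r | box | diam
deriving DecidableEq

/-- Formulas of the correspondence language: classical first-order logic without
identity, with variables indexed by `ℕ`, unary predicate letters `P n` (n : ℕ),
and the three binary relation symbols. -/
inductive FOForm : Type
  | falsum : FOForm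
  | pred : ℕ → ℕ → FOForm            -- `pred n v` is `P_n(x_v)`
  | rel : RelSym → ℕ → ℕ → FOForm    -- `rel s v w` is `S(x_v, x_w)`
  | conj : FOForm → FOForm → FOForm
  | disj : FOForm → FOForm → FOForm
  | impl : FOForm → FOForm → FOForm
  | all : ℕ → FOForm → FOForm
  | ex : ℕ → FOForm → FOForm

namespace FOForm

/-- Free variables of a correspondence formula. -/
def freeVars : FOForm → Finset ℕ
  | falsum => ∅
  | pred _ v => {v}
  | rel _ v w => {v, w}
  | conj f g => f.freeVars ∪ g.freeVars
  | disj f g => f.freeVars ∪ g.freeVars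
  | impl f g => f.freeVars ∪ g.freeVars
  | all v f => f.freeVars \ {v}
  | ex v f => f.freeVars \ {v}

/-- The unary predicate letters occurring in a formula (the binary relation
symbols R, R_□, R_◇ are regarded as belonging to every vocabulary Σ_φ). -/
def predLetters : FOForm → Finset ℕ
  | falsum => ∅
  | pred n _ => {n}
  | rel _ _ _ => ∅
  | conj f g => f.predLetters ∪ g.predLetters
  | disj f g => f.predLetters ∪ g.predLetters
  | impl f g => f.predLetters ∪ g.predLetters
  | all _ f => f.predLetters
  | ex _ f => f.predLetters

/-- Degree of a formula: the greatest number of nested quantifiers. -/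
def degree : FOForm → ℕ
  | falsum => 0
  | pred _ _ => 0
  | rel _ _ _ => 0
  | conj f g => max f.degree g.degree
  | disj f g => max f.degree g.degree
  | impl f g => max f.degree g.degree
  | all _ f => f.degree + 1
  | ex _ f => f.degree + 1

end FOForm

/-- A model of the correspondence language: a domain together with
interpretations of R, R_□, R_◇ and of the unary predicate letters.
(A Θ-model only consults the letters in Θ.) -/
structure Model : Type 1 where
  U : Type
  rel : U → U → Prop
  relBox : U → U → Prop
  relDiam : U → U → Prop
  pred : ℕ → U → Prop

/-- Interpretation of a binary relation symbol in a model. -/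
def Model.relOf (M : Model) : RelSym → M.U → M.U → Prop
  | .r => M.rel
  | .box => M.relBox
  | .diam => M.relDiam

/-- Tarskian satisfaction of a formula in a model under an assignment. -/
def Sat (M : Model) : FOForm → (ℕ → M.U) → Prop
  | .falsum, _ => False
  | .pred n v, α => M.pred n (α v)
  | .rel s v w, α => M.relOf s (α v) (α w)
  | .conj f g, α => Sat M f α ∧ Sat M g α
  | .disj f g, α => Sat M f α ∨ Sat M g α
  | .impl f g, α => Sat M f α → Sat M g α
  | .all v f, α => ∀ u : M.U, Sat M f (Function.update α v u)
  | .ex v f, α => ∃ u : M.U, Sat M f (Function.update α v u)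

/-- `M, a ⊨ φ(x)`: φ is true in `M` under any assignment sending `x` to `a`. -/
def SatAt (M : Model) (a : M.U) (x : ℕ) (φ : FOForm) : Prop :=
  ∀ α : ℕ → M.U, α x = a → Sat M φ α

/-- Logical equivalence of correspondence formulas. -/
def Equiv (φ ψ : FOForm) : Prop :=
  ∀ (M : Model) (α : ℕ → M.U), Sat M φ α ↔ Sat M ψ α

/-- Logical entailment between correspondence formulas. -/
def Entails (φ ψ : FOForm) : Prop :=
  ∀ (M : Model) (α : ℕ → M.U), Sat M φ α → Sat M ψ α

/-- Modal intuitionistic formulas: built from propositional letters `p n`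
using ⊥, ∧, ∨, →, □, ◇. -/
inductive MForm : Type
  | bot : MForm
  | prop : ℕ → MForm
  | conj : MForm → MForm → MForm
  | disj : MForm → MForm → MForm
  | impl : MForm → MForm → MForm
  | box : MForm → MForm
  | diam : MForm → MForm

/-- The (i,j)-standard x-translation `ST_ij`.  `boxOne = true` means the box
clause (□₁) is used (i = 1), `boxOne = false` means (□₂) (i = 2); likewise
`diamOne = true` means the diamond clause (◇₁) (j = 1) and `diamOne = false`
means (◇₂) (j = 2).  Bound variables are chosen fresh as `x+1`, `x+2`. -/
def ST (boxOne diamOne : Bool) : MForm → ℕ → FOForm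
  | .bot, _ => .falsum
  | .prop n, x => .pred n x
  | .conj I J, x => .conj (ST boxOne diamOne I x) (ST boxOne diamOne J x)
  | .disj I J, x => .disj (ST boxOne diamOne I x) (ST boxOne diamOne J x)
  | .impl I J, x =>
      .all (x + 1) (.impl (.rel .r x (x + 1))
        (.impl (ST boxOne diamOne I (x + 1)) (ST boxOne diamOne J (x + 1))))
  | .box I, x =>
      if boxOne then
        .all (x + 1) (.impl (.rel .box x (x + 1)) (ST boxOne diamOne I (x + 1)))
      else
        .all (x + 1) (.impl (.rel .r x (x + 1))
          (.all (x + 2) (.impl (.rel .box (x + 1) (x + 2)) (ST boxOne diamOne I (x + 2)))))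
  | .diam I, x =>
      if diamOne then
        .ex (x + 1) (.conj (.rel .diam x (x + 1)) (ST boxOne diamOne I (x + 1)))
      else
        .all (x + 1) (.impl (.rel .r x (x + 1))
          (.ex (x + 2) (.conj (.rel .diam (x + 1) (x + 2)) (ST boxOne diamOne I (x + 2)))))

/-! ### Conditions on relations between tuples (the k-asimulation conditions).
A relation between the two models is represented by its two directed
components; `N` is the model of the source tuple and `P` that of the target
tuple.  A tuple `(ā_m, a)` is represented as the list `as ++ [a]`, with
`m = as.length`. -/

section TupleConds

variable (N P : Model)

/-- The "p-type" condition: related tuples are nonempty and of equal length. -/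
def TypeCond (A : List N.U → List P.U → Prop) : Prop :=
  ∀ as bs, A as bs → as ≠ [] ∧ as.length = bs.length

/-- (p-base). -/
def BaseCond (Θ : Set ℕ) (A : List N.U → List P.U → Prop) : Prop :=
  ∀ (as : List N.U) (bs : List P.U) (a : N.U) (b : P.U),
    A (as ++ [a]) (bs ++ [b]) → ∀ n ∈ Θ, N.pred n a → P.pred n b

/-- (p-step). -/
def StepCond (k : ℕ) (A : List N.U → List P.U → Prop)
    (Arev : List P.U → List N.U → Prop) : Prop :=
  ∀ (as : List N.U) (bs : List P.U) (a : N.U) (b d : P.U),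
    A (as ++ [a]) (bs ++ [b]) → P.rel b d → as.length < k →
    ∃ c : N.U, N.rel a c ∧ A (as ++ [a, c]) (bs ++ [b, d]) ∧
      Arev (bs ++ [b, d]) (as ++ [a, c])

/-- (p-box-1). -/
def Box1Cond (k : ℕ) (A : List N.U → List P.U → Prop) : Prop :=
  ∀ (as : List N.U) (bs : List P.U) (a : N.U) (b d : P.U),
    A (as ++ [a]) (bs ++ [b]) → P.relBox b d → as.length < k →
    ∃ c : N.U, N.relBox a c ∧ A (as ++ [a, c]) (bs ++ [b, d])

/-- (p-box-2). -/
def Box2Cond (k : ℕ) (A : List N.U → List P.U → Prop) : Prop :=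
  ∀ (as : List N.U) (bs : List P.U) (a : N.U) (b d f : P.U),
    A (as ++ [a]) (bs ++ [b]) → P.rel b d → P.relBox d f → as.length + 1 < k →
    ∃ c e : N.U, N.rel a c ∧ N.relBox c e ∧ A (as ++ [a, c, e]) (bs ++ [b, d, f])

/-- (p-diam-1). -/
def Diam1Cond (k : ℕ) (A : List N.U → List P.U → Prop) : Prop :=
  ∀ (as : List N.U) (bs : List P.U) (a c : N.U) (b : P.U),
    A (as ++ [a]) (bs ++ [b]) → N.relDiam a c → as.length < k →
    ∃ d : P.U, P.relDiam b d ∧ A (as ++ [a, c]) (bs ++ [b, d])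

/-- (p-diam-2(1)). -/
def Diam2aCond (k : ℕ) (A B : List N.U → List P.U → Prop) : Prop :=
  ∀ (as : List N.U) (bs : List P.U) (a : N.U) (b d : P.U),
    A (as ++ [a]) (bs ++ [b]) → P.rel b d → as.length + 1 < k →
    ∃ c : N.U, N.rel a c ∧ B (as ++ [a, c]) (bs ++ [b, d])

/-- (p-diam-2(2)). -/
def Diam2bCond (k : ℕ) (B A : List N.U → List P.U → Prop) : Prop :=
  ∀ (as : List N.U) (bs : List P.U) (a c : N.U) (b : P.U),
    B (as ++ [a]) (bs ++ [b]) → N.relDiam a c → as.length < k →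
    ∃ d : P.U, P.relDiam b d ∧ A (as ++ [a, c]) (bs ++ [b, d])

end TupleConds

/-- An (i,1)-modal ⟨(M₁,t),(M₂,u)⟩_k-asimulation (j = 1): a single relation `A`
given by its two directed components `A12`, `A21`. -/
def IsKAsimD1 (boxOne : Bool) (Θ : Set ℕ) (M₁ M₂ : Model) (t : M₁.U) (u : M₂.U) (k : ℕ)
    (A12 : List M₁.U → List M₂.U → Prop) (A21 : List M₂.U → List M₁.U → Prop) : Prop :=
  TypeCond M₁ M₂ A12 ∧ TypeCond M₂ M₁ A21 ∧
  A12 [t] [u] ∧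
  BaseCond M₁ M₂ Θ A12 ∧ BaseCond M₂ M₁ Θ A21 ∧
  StepCond M₁ M₂ k A12 A21 ∧ StepCond M₂ M₁ k A21 A12 ∧
  (if boxOne then Box1Cond M₁ M₂ k A12 ∧ Box1Cond M₂ M₁ k A21
   else Box2Cond M₁ M₂ k A12 ∧ Box2Cond M₂ M₁ k A21) ∧
  Diam1Cond M₁ M₂ k A12 ∧ Diam1Cond M₂ M₁ k A21

/-- An (i,2)-modal ⟨(M₁,t),(M₂,u)⟩_k-asimulation (j = 2): an ordered pair
(A, B) of relations, each given by its two directed components. -/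
def IsKAsimD2 (boxOne : Bool) (Θ : Set ℕ) (M₁ M₂ : Model) (t : M₁.U) (u : M₂.U) (k : ℕ)
    (A12 : List M₁.U → List M₂.U → Prop) (A21 : List M₂.U → List M₁.U → Prop)
    (B12 : List M₁.U → List M₂.U → Prop) (B21 : List M₂.U → List M₁.U → Prop) : Prop :=
  TypeCond M₁ M₂ A12 ∧ TypeCond M₂ M₁ A21 ∧
  TypeCond M₁ M₂ B12 ∧ TypeCond M₂ M₁ B21 ∧
  A12 [t] [u] ∧
  BaseCond M₁ M₂ Θ A12 ∧ BaseCond M₂ M₁ Θ A21 ∧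
  StepCond M₁ M₂ k A12 A21 ∧ StepCond M₂ M₁ k A21 A12 ∧
  (if boxOne then Box1Cond M₁ M₂ k A12 ∧ Box1Cond M₂ M₁ k A21
   else Box2Cond M₁ M₂ k A12 ∧ Box2Cond M₂ M₁ k A21) ∧
  Diam2aCond M₁ M₂ k A12 B12 ∧ Diam2aCond M₂ M₁ k A21 B21 ∧
  Diam2bCond M₁ M₂ k B12 A12 ∧ Diam2bCond M₂ M₁ k B21 A21

/-- φ(x) is invariant with respect to (i,1)-modal k-asimulations. -/
def KInvariantD1 (boxOne : Bool) (x : ℕ) (φ : FOForm) (k : ℕ) : Prop :=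
  ∀ Θ : Set ℕ, (φ.predLetters : Set ℕ) ⊆ Θ →
  ∀ (M₁ M₂ : Model) (t : M₁.U) (u : M₂.U)
    (A12 : List M₁.U → List M₂.U → Prop) (A21 : List M₂.U → List M₁.U → Prop),
    IsKAsimD1 boxOne Θ M₁ M₂ t u k A12 A21 →
    ∀ (a : M₁.U) (b : M₂.U), A12 [a] [b] → SatAt M₁ a x φ → SatAt M₂ b x φ

/-- φ(x) is invariant with respect to (i,2)-modal k-asimulations. -/
def KInvariantD2 (boxOne : Bool) (x : ℕ) (φ : FOForm) (k : ℕ) : Prop :=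
  ∀ Θ : Set ℕ, (φ.predLetters : Set ℕ) ⊆ Θ →
  ∀ (M₁ M₂ : Model) (t : M₁.U) (u : M₂.U)
    (A12 : List M₁.U → List M₂.U → Prop) (A21 : List M₂.U → List M₁.U → Prop)
    (B12 : List M₁.U → List M₂.U → Prop) (B21 : List M₂.U → List M₁.U → Prop),
    IsKAsimD2 boxOne Θ M₁ M₂ t u k A12 A21 B12 B21 →
    ∀ (a : M₁.U) (b : M₂.U), A12 [a] [b] → SatAt M₁ a x φ → SatAt M₂ b x φ

/-! ### Conditions for asimulations *simpliciter* (relations between elements). -/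

section ElemConds

variable (N P : Model)

/-- (base). -/
def BaseCondE (Θ : Set ℕ) (A : N.U → P.U → Prop) : Prop :=
  ∀ (a : N.U) (b : P.U), A a b → ∀ n ∈ Θ, N.pred n a → P.pred n b

/-- (step). -/
def StepCondE (A : N.U → P.U → Prop) (Arev : P.U → N.U → Prop) : Prop :=
  ∀ (a : N.U) (b d : P.U), A a b → P.rel b d →
    ∃ c : N.U, N.rel a c ∧ A c d ∧ Arev d c

/-- (box-1). -/
def Box1CondE (A : N.U → P.U → Prop) : Prop :=
  ∀ (a : N.U) (b d : P.U), A a b → P.relBox b d →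
    ∃ c : N.U, N.relBox a c ∧ A c d

/-- (box-2). -/
def Box2CondE (A : N.U → P.U → Prop) : Prop :=
  ∀ (a : N.U) (b d f : P.U), A a b → P.rel b d → P.relBox d f →
    ∃ c e : N.U, N.rel a c ∧ N.relBox c e ∧ A e f

/-- (diam-1). -/
def Diam1CondE (A : N.U → P.U → Prop) : Prop :=
  ∀ (a c : N.U) (b : P.U), A a b → N.relDiam a c →
    ∃ d : P.U, P.relDiam b d ∧ A c d

/-- (diam-2(1)). -/
def Diam2aCondE (A B : N.U → P.U → Prop) : Prop :=
  ∀ (a : N.U) (b d : P.U), A a b → P.rel b d →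
    ∃ c : N.U, N.rel a c ∧ B c d

/-- (diam-2(2)). -/
def Diam2bCondE (B A : N.U → P.U → Prop) : Prop :=
  ∀ (a c : N.U) (b : P.U), B a b → N.relDiam a c →
    ∃ d : P.U, P.relDiam b d ∧ A c d

end ElemConds

/-- An (i,1)-modal ⟨(M₁,t),(M₂,u)⟩-asimulation (j = 1). -/
def IsAsimD1 (boxOne : Bool) (Θ : Set ℕ) (M₁ M₂ : Model) (t : M₁.U) (u : M₂.U)
    (A12 : M₁.U → M₂.U → Prop) (A21 : M₂.U → M₁.U → Prop) : Prop :=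
  A12 t u ∧
  BaseCondE M₁ M₂ Θ A12 ∧ BaseCondE M₂ M₁ Θ A21 ∧
  StepCondE M₁ M₂ A12 A21 ∧ StepCondE M₂ M₁ A21 A12 ∧
  (if boxOne then Box1CondE M₁ M₂ A12 ∧ Box1CondE M₂ M₁ A21
   else Box2CondE M₁ M₂ A12 ∧ Box2CondE M₂ M₁ A21) ∧
  Diam1CondE M₁ M₂ A12 ∧ Diam1CondE M₂ M₁ A21

/-- An (i,2)-modal ⟨(M₁,t),(M₂,u)⟩-asimulation (j = 2). -/
def IsAsimD2 (boxOne : Bool) (Θ : Set ℕ) (M₁ M₂ : Model) (t : M₁.U) (u : M₂.U)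
    (A12 : M₁.U → M₂.U → Prop) (A21 : M₂.U → M₁.U → Prop)
    (B12 : M₁.U → M₂.U → Prop) (B21 : M₂.U → M₁.U → Prop) : Prop :=
  A12 t u ∧
  BaseCondE M₁ M₂ Θ A12 ∧ BaseCondE M₂ M₁ Θ A21 ∧
  StepCondE M₁ M₂ A12 A21 ∧ StepCondE M₂ M₁ A21 A12 ∧
  (if boxOne then Box1CondE M₁ M₂ A12 ∧ Box1CondE M₂ M₁ A21
   else Box2CondE M₁ M₂ A12 ∧ Box2CondE M₂ M₁ A21) ∧
  Diam2aCondE M₁ M₂ A12 B12 ∧ Diam2aCondE M₂ M₁ A21 B21 ∧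
  Diam2bCondE M₁ M₂ B12 A12 ∧ Diam2bCondE M₂ M₁ B21 A21

/-- φ(x) is invariant with respect to (i,1)-modal asimulations. -/
def InvariantD1 (boxOne : Bool) (x : ℕ) (φ : FOForm) : Prop :=
  ∀ Θ : Set ℕ, (φ.predLetters : Set ℕ) ⊆ Θ →
  ∀ (M₁ M₂ : Model) (t : M₁.U) (u : M₂.U)
    (A12 : M₁.U → M₂.U → Prop) (A21 : M₂.U → M₁.U → Prop),
    IsAsimD1 boxOne Θ M₁ M₂ t u A12 A21 →
    ∀ (a : M₁.U) (b : M₂.U), A12 a b → SatAt M₁ a x φ → SatAt M₂ b x φ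

/-- φ(x) is invariant with respect to (i,2)-modal asimulations. -/
def InvariantD2 (boxOne : Bool) (x : ℕ) (φ : FOForm) : Prop :=
  ∀ Θ : Set ℕ, (φ.predLetters : Set ℕ) ⊆ Θ →
  ∀ (M₁ M₂ : Model) (t : M₁.U) (u : M₂.U)
    (A12 : M₁.U → M₂.U → Prop) (A21 : M₂.U → M₁.U → Prop)
    (B12 : M₁.U → M₂.U → Prop) (B21 : M₂.U → M₁.U → Prop),
    IsAsimD2 boxOne Θ M₁ M₂ t u A12 A21 B12 B21 →
    ∀ (a : M₁.U) (b : M₂.U), A12 a b → SatAt M₁ a x φ → SatAt M₂ b x φ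

/-! ### Types, complete conjunctions, ω-saturation. -/

/-- `int(φ,x,l)`: the set of (2,2)-standard x-translations of modal
intuitionistic formulas which are (Σ_φ,x,l)-formulas. -/
def intSet (φ : FOForm) (x l : ℕ) : Set FOForm :=
  {ψ | (∃ I : MForm, ψ = ST false false I x) ∧
    ψ.predLetters ⊆ φ.predLetters ∧ ψ.freeVars ⊆ {x} ∧ ψ.degree ≤ l}

/-- `tp_l(φ(x),M,a)`. -/
def tpSet (φ : FOForm) (x l : ℕ) (M : Model) (a : M.U) : Set FOForm :=
  {ψ | ψ ∈ intSet φ x l ∧ SatAt M a x ψ}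

/-- Conjunction of a nonempty list of formulas. -/
def listConj : FOForm → List FOForm → FOForm
  | ψ, [] => ψ
  | ψ, χ :: L => FOForm.conj ψ (listConj χ L)

/-- Ψ(x) is a complete (φ,x,k)-conjunction. -/
def IsCompleteConj (φ : FOForm) (x k : ℕ) (Ψ : FOForm) : Prop :=
  (∃ (ψ₀ : FOForm) (L : List FOForm), ψ₀ ∈ intSet φ x k ∧
    (∀ χ ∈ L, χ ∈ intSet φ x k) ∧ Ψ = listConj ψ₀ L) ∧
  ∃ (M : Model) (a : M.U), SatAt M a x (FOForm.conj Ψ φ) ∧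
    ∀ ψ ∈ tpSet φ x k M a, Entails Ψ ψ

/-- `int_x(Θ)` for the (i,j)-standard translation. -/
def intX (Θ : Set ℕ) (boxOne diamOne : Bool) (x : ℕ) : Set FOForm :=
  {ψ | (∃ I : MForm, ψ = ST boxOne diamOne I x) ∧ (ψ.predLetters : Set ℕ) ⊆ Θ}

/-- `tp_x(M,t)` for the (i,j)-standard translation. -/
def tpX (Θ : Set ℕ) (boxOne diamOne : Bool) (x : ℕ) (M : Model) (t : M.U) : Set FOForm :=
  {ψ | ψ ∈ intX Θ boxOne diamOne x ∧ SatAt M t x ψ}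

/-- `imp_x(M,t) = ⋂ { t̄p_x(M,u) : t R_◇ u }` (for the (2,2)-translation). -/
def impX (Θ : Set ℕ) (x : ℕ) (M : Model) (t : M.U) : Set FOForm :=
  {ψ | ψ ∈ intX Θ false false x ∧ ∀ u : M.U, M.relDiam t u → ¬ SatAt M u x ψ}

/-- ω-saturation: for every finite tuple of parameters (the first `n` values of
an assignment `α`) and every set `Γ` of formulas with finitely many free
variables beyond the parameters, if `Γ` is consistent with the first-order
theory of `[M,ā]` (i.e. satisfiable together with it in some model), then `Γ`
is realized in `[M,ā]`. -/
def OmegaSaturated (M : Model) : Prop :=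
  ∀ (n : ℕ) (α : ℕ → M.U) (Γ : Set FOForm),
    (∃ k : ℕ, ∀ γ ∈ Γ, γ.freeVars ⊆ Finset.range (n + k)) →
    (∃ (N : Model) (β : ℕ → N.U),
      (∀ ψ : FOForm, ψ.freeVars ⊆ Finset.range n → Sat M ψ α → Sat N ψ β) ∧
      ∀ γ ∈ Γ, Sat N γ β) →
    ∃ α' : ℕ → M.U, (∀ i < n, α' i = α i) ∧ ∀ γ ∈ Γ, Sat M γ α'

/-! ### Relativization to a class κ of models. -/

/-- κ(Θ) is first-order axiomatizable for every finite Θ (with R ∈ Θ): for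
every finite set `S` of unary predicate letters there is a set of Θ-sentences
axiomatizing membership in κ. -/
def FinAxiomatizable (κ : Set Model) : Prop :=
  ∀ S : Finset ℕ, ∃ Ax : Set FOForm,
    (∀ ψ ∈ Ax, ψ.freeVars = ∅ ∧ (ψ.predLetters : Set ℕ) ⊆ (S : Set ℕ)) ∧
    ∀ M : Model, M ∈ κ ↔ ∀ ψ ∈ Ax, ∀ α : ℕ → M.U, Sat M ψ α

/-- φ κ-follows from ψ: {ψ, ¬φ} is not κ-satisfiable. -/
def KappaFollows (κ : Set Model) (ψ φ : FOForm) : Prop :=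
  ¬ ∃ M : Model, M ∈ κ ∧ ∃ α : ℕ → M.U, Sat M ψ α ∧ ¬ Sat M φ α

/-- κ-equivalence of formulas. -/
def KappaEquiv (κ : Set Model) (φ ψ : FOForm) : Prop :=
  KappaFollows κ φ ψ ∧ KappaFollows κ ψ φ

/-- φ(x) is κ-invariant with respect to (i,1)-modal asimulations. -/
def KappaInvariantD1 (κ : Set Model) (boxOne : Bool) (x : ℕ) (φ : FOForm) : Prop :=
  ∀ Θ : Set ℕ, (φ.predLetters : Set ℕ) ⊆ Θ →
  ∀ (M₁ M₂ : Model), M₁ ∈ κ → M₂ ∈ κ →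
  ∀ (t : M₁.U) (u : M₂.U)
    (A12 : M₁.U → M₂.U → Prop) (A21 : M₂.U → M₁.U → Prop),
    IsAsimD1 boxOne Θ M₁ M₂ t u A12 A21 →
    ∀ (a : M₁.U) (b : M₂.U), A12 a b → SatAt M₁ a x φ → SatAt M₂ b x φ

/-- φ(x) is κ-invariant with respect to (i,2)-modal asimulations. -/
def KappaInvariantD2 (κ : Set Model) (boxOne : Bool) (x : ℕ) (φ : FOForm) : Prop :=
  ∀ Θ : Set ℕ, (φ.predLetters : Set ℕ) ⊆ Θ →
  ∀ (M₁ M₂ : Model), M₁ ∈ κ → M₂ ∈ κ →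
  ∀ (t : M₁.U) (u : M₂.U)
    (A12 : M₁.U → M₂.U → Prop) (A21 : M₂.U → M₁.U → Prop)
    (B12 : M₁.U → M₂.U → Prop) (B21 : M₂.U → M₁.U → Prop),
    IsAsimD2 boxOne Θ M₁ M₂ t u A12 A21 B12 B21 →
    ∀ (a : M₁.U) (b : M₂.U), A12 a b → SatAt M₁ a x φ → SatAt M₂ b x φ

/-- φ(x) is κ-invariant with respect to (i,j)-modal asimulations
(`diamOne = true` means j = 1). -/
def KappaInvariant (κ : Set Model) (boxOne diamOne : Bool) (x : ℕ) (φ : FOForm) : Prop :=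
  if diamOne then KappaInvariantD1 κ boxOne x φ else KappaInvariantD2 κ boxOne x φ


/-!
Modal formulas of degree `d` are preserved along a k-asimulation as long as at most `k - d` moves
have been made, which gives one direction. Conversely, from the finitely many letters of `φ` build
finite lists of formulas `L₀ ⊆ L₁ ⊆ ⋯`, where `L_{l+1}` adds to `L_l` the implications `⋀X → ⋁Y`,
the boxes `□⋁Y` and the diamonds `◇⋁ᵢ⋀Xᵢ` with `X, Xᵢ, Y ⊆ L_l`. Evaluating such a formula with
`X` the part of `L_l` forced at a point and `Y` the rest shows that "after `m` moves, `L_{k-m}` is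
preserved" is a k-asimulation. Hence a k-invariant `φ` is preserved along inclusion of `L_k`-types,
and, as `L_k` is finite, `φ` is the disjunction of the conjunctions over `L_k` that entail it.
-/

section CorrespondenceLanguage

theorem eqOn_update_update {ι X : Type*} [DecidableEq ι] {α β : ι → X} {s : Set ι} {v : ι}
    (h : Set.EqOn α β (s \ {v})) (u : X) :
    Set.EqOn (Function.update α v u) (Function.update β v u) s := by
  intro w hw
  rcases eq_or_ne w v with rfl | hne
  · simp only [Function.update_self]
  · simpa only [Function.update_of_ne hne] using h ⟨hw, hne⟩

theorem sat_congr (M : Model) (φ : FOForm) {α β : ℕ → M.U}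
    (h : Set.EqOn α β φ.freeVars) : Sat M φ α ↔ Sat M φ β := by
  induction φ generalizing α β with
  | falsum => exact Iff.rfl
  | pred n v => simp only [Sat, h (show v ∈ _ by simp [FOForm.freeVars])]
  | rel s v w =>
    simp only [Sat, h (show v ∈ _ by simp [FOForm.freeVars]),
      h (show w ∈ _ by simp [FOForm.freeVars])]
  | conj f g ihf ihg | disj f g ihf ihg | impl f g ihf ihg =>
    rw [FOForm.freeVars, Finset.coe_union, Set.eqOn_union] at h
    simp only [Sat, ihf h.1, ihg h.2]
  | all v f ih =>
    rw [FOForm.freeVars, Finset.coe_sdiff, Finset.coe_singleton] at h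
    exact forall_congr' fun u => ih (eqOn_update_update h u)
  | ex v f ih =>
    rw [FOForm.freeVars, Finset.coe_sdiff, Finset.coe_singleton] at h
    exact exists_congr fun u => ih (eqOn_update_update h u)

theorem satAt_iff_sat {x : ℕ} {φ : FOForm} (hfv : φ.freeVars ⊆ {x}) (M : Model)
    (α : ℕ → M.U) : SatAt M (α x) x φ ↔ Sat M φ α := by
  refine ⟨fun h => h α rfl, fun h β hβ => (sat_congr M φ fun v hv => ?_).2 h⟩
  obtain rfl := Finset.mem_singleton.1 (hfv hv)
  exact hβ

/-- The reduct of `M` to the unary letters in `Θ`; since a `Model` interprets every letter, the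
letters outside `Θ` are interpreted as empty. -/
def Model.reduct (Θ : Set ℕ) (M : Model) : Model :=
  { M with pred := fun n a => n ∈ Θ ∧ M.pred n a }

theorem sat_reduct {Θ : Set ℕ} (M : Model) {φ : FOForm} (hφ : (φ.predLetters : Set ℕ) ⊆ Θ)
    (α : ℕ → M.U) : Sat (M.reduct Θ) φ α ↔ Sat M φ α := by
  induction φ generalizing α with
  | falsum => exact Iff.rfl
  | pred n v => exact and_iff_right (hφ (by simp [FOForm.predLetters]))
  | rel s v w => cases s <;> exact Iff.rfl
  | conj f g ihf ihg =>
    rw [FOForm.predLetters, Finset.coe_union, Set.union_subset_iff] at hφ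
    exact and_congr (ihf hφ.1 α) (ihg hφ.2 α)
  | disj f g ihf ihg =>
    rw [FOForm.predLetters, Finset.coe_union, Set.union_subset_iff] at hφ
    exact or_congr (ihf hφ.1 α) (ihg hφ.2 α)
  | impl f g ihf ihg =>
    rw [FOForm.predLetters, Finset.coe_union, Set.union_subset_iff] at hφ
    exact imp_congr (ihf hφ.1 α) (ihg hφ.2 α)
  | all v f ih => exact forall_congr' fun u => ih hφ (Function.update α v u)
  | ex v f ih => exact exists_congr fun u => ih hφ (Function.update α v u)

end CorrespondenceLanguage

section Forcing

/-- The forcing relation `M, a ⊩ I` of modal intuitionistic logic, with the clauses (□₂) and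
(◇₂); it is the semantic counterpart of the translation `ST_22`. -/
def Forces (M : Model) : MForm → M.U → Prop
  | .bot, _ => False
  | .prop n, a => M.pred n a
  | .conj I J, a => Forces M I a ∧ Forces M J a
  | .disj I J, a => Forces M I a ∨ Forces M J a
  | .impl I J, a => ∀ b, M.rel a b → Forces M I b → Forces M J b
  | .box I, a => ∀ b, M.rel a b → ∀ c, M.relBox b c → Forces M I c
  | .diam I, a => ∀ b, M.rel a b → ∃ c, M.relDiam b c ∧ Forces M I c

theorem sat_ST_iff_forces (M : Model) (I : MForm) (x : ℕ) (α : ℕ → M.U) :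
    Sat M (ST false false I x) α ↔ Forces M I (α x) := by
  induction I generalizing x α with
  | bot | prop n => exact Iff.rfl
  | conj I J ihI ihJ | disj I J ihI ihJ => simp only [ST, Sat, Forces, ihI, ihJ]
  | impl I J ihI ihJ => simp [ST, Sat, Forces, ihI, ihJ, Model.relOf]
  | box I ih | diam I ih => simp [ST, Sat, Forces, ih, Model.relOf]

/-- The degree of a modal formula, i.e. the quantifier depth of its translation `ST_22`. -/
def MForm.degree : MForm → ℕ
  | bot => 0
  | prop _ => 0
  | conj I J => max I.degree J.degree
  | disj I J => max I.degree J.degree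
  | impl I J => max I.degree J.degree + 1
  | box I => I.degree + 2
  | diam I => I.degree + 2

/-- The finite conjunction `⋀ L`, with `⊥ → ⊥` as the empty conjunction. -/
def MForm.conjList (L : List MForm) : MForm :=
  L.foldr conj (impl bot bot)

/-- The finite disjunction `⋁ L`, with `⊥` as the empty disjunction. -/
def MForm.disjList (L : List MForm) : MForm :=
  L.foldr disj bot

theorem forces_conjList {M : Model} {a : M.U} {L : List MForm} :
    Forces M (.conjList L) a ↔ ∀ I ∈ L, Forces M I a := by
  induction L with
  | nil => simp [MForm.conjList, Forces]
  | cons I L ih =>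
    rw [List.forall_mem_cons, ← ih]
    exact Iff.rfl

theorem forces_disjList {M : Model} {a : M.U} {L : List MForm} :
    Forces M (.disjList L) a ↔ ∃ I ∈ L, Forces M I a := by
  induction L with
  | nil => simp [MForm.disjList, Forces]
  | cons I L ih =>
    rw [List.exists_mem_cons_iff, ← ih]
    exact Iff.rfl

end Forcing

section HalfKAsim

/-- The clauses of a (2,2)-modal k-asimulation that concern the direction from `N` to `P`. Only
(p-step) refers to the opposite component `A'` of the first relation. -/
structure HalfKAsim (Θ : Set ℕ) (k : ℕ) (N P : Model) (A : List N.U → List P.U → Prop)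
    (A' : List P.U → List N.U → Prop) (B : List N.U → List P.U → Prop) : Prop where
  type_fst : TypeCond N P A
  type_snd : TypeCond N P B
  base : BaseCond N P Θ A
  step : StepCond N P k A A'
  box : Box2Cond N P k A
  diam_rel : Diam2aCond N P k A B
  diam_relDiam : Diam2bCond N P k B A

theorem isKAsimD2_iff_halfKAsim {Θ : Set ℕ} {k : ℕ} {M₁ M₂ : Model} {t : M₁.U} {u : M₂.U}
    {A₁₂ B₁₂ : List M₁.U → List M₂.U → Prop} {A₂₁ B₂₁ : List M₂.U → List M₁.U → Prop} :
    IsKAsimD2 false Θ M₁ M₂ t u k A₁₂ A₂₁ B₁₂ B₂₁ ↔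
      A₁₂ [t] [u] ∧ HalfKAsim Θ k M₁ M₂ A₁₂ A₂₁ B₁₂ ∧ HalfKAsim Θ k M₂ M₁ A₂₁ A₁₂ B₂₁ := by
  constructor
  · rintro ⟨tA, tA', tB, tB', h, b, b', s, s', ⟨bx, bx'⟩, d, d', e, e'⟩
    exact ⟨h, ⟨tA, tB, b, s, bx, d, e⟩, ⟨tA', tB', b', s', bx', d', e'⟩⟩
  · rintro ⟨h, ⟨tA, tB, b, s, bx, d, e⟩, ⟨tA', tB', b', s', bx', d', e'⟩⟩
    exact ⟨tA, tA', tB, tB', h, b, b', s, s', ⟨bx, bx'⟩, d, d', e, e'⟩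

theorem HalfKAsim.reduct {Θ : Set ℕ} {k : ℕ} {N P : Model} {A B : List N.U → List P.U → Prop}
    {A' : List P.U → List N.U → Prop} (h : HalfKAsim Θ k N P A A' B) :
    HalfKAsim Set.univ k (N.reduct Θ) (P.reduct Θ) A A' B where
  type_fst := h.type_fst
  type_snd := h.type_snd
  base := fun as bs a b hA n _ hn => ⟨hn.1, h.base as bs a b hA n hn.1 hn.2⟩
  step := h.step
  box := h.box
  diam_rel := h.diam_rel
  diam_relDiam := h.diam_relDiam

theorem TypeCond.length_eq {N P : Model} {A : List N.U → List P.U → Prop} (h : TypeCond N P A)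
    {as : List N.U} {bs : List P.U} {a : N.U} {b : P.U} (hA : A (as ++ [a]) (bs ++ [b])) :
    as.length = bs.length := by
  simpa using (h _ _ hA).2

theorem HalfKAsim.forces {k : ℕ} {N P : Model}
    {A B : List N.U → List P.U → Prop} {A' B' : List P.U → List N.U → Prop}
    (h : HalfKAsim Set.univ k N P A A' B) (h' : HalfKAsim Set.univ k P N A' A B')
    {I : MForm} {as : List N.U} {bs : List P.U} {a : N.U} {b : P.U}
    (hA : A (as ++ [a]) (bs ++ [b])) (hk : as.length + I.degree ≤ k) (ha : Forces N I a) :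
    Forces P I b := by
  induction I generalizing N P A B A' B' as bs a b with
  | bot => exact ha.elim
  | prop n => exact h.base as bs a b hA n (Set.mem_univ n) ha
  | conj I J ihI ihJ =>
    rw [MForm.degree] at hk
    exact ⟨ihI h h' hA (by lia) ha.1, ihJ h h' hA (by lia) ha.2⟩
  | disj I J ihI ihJ =>
    rw [MForm.degree] at hk
    exact ha.imp (ihI h h' hA (by lia)) (ihJ h h' hA (by lia))
  | impl I J ihI ihJ =>
    rw [MForm.degree] at hk
    intro d hbd hd
    obtain ⟨c, hac, hcd, hdc⟩ := h.step as bs a b d hA hbd (by lia)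
    rw [List.append_cons as, List.append_cons bs] at hcd hdc
    have hlen := h.type_fst.length_eq hA
    have hc : Forces N I c := ihI h' h hdc (by grind) hd
    exact ihJ h h' hcd (by grind) (ha c hac hc)
  | box I ih =>
    rw [MForm.degree] at hk
    intro d hbd f hdf
    obtain ⟨c, e, hac, hce, hef⟩ := h.box as bs a b d f hA hbd hdf (by lia)
    rw [List.append_cons as, List.append_cons bs, List.append_cons _ c,
      List.append_cons _ d] at hef
    exact ih h h' hef (by grind) (ha c hac e hce)
  | diam I ih =>
    rw [MForm.degree] at hk
    intro d hbd
    obtain ⟨c, hac, hcd⟩ := h.diam_rel as bs a b d hA hbd (by lia)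
    obtain ⟨e, hce, he⟩ := ha c hac
    rw [List.append_cons as, List.append_cons bs] at hcd
    obtain ⟨f, hdf, hef⟩ := h.diam_relDiam _ _ c e d hcd hce (by grind)
    rw [List.append_cons _ c, List.append_cons _ d] at hef
    exact ⟨f, hdf, ih h h' hef (by grind) he⟩

-- Letters of `I` outside `Θ` need not be preserved, so the argument passes to the reducts to `Θ`.
theorem kInvariantD2_of_equiv_ST {x : ℕ} {φ : FOForm} {I : MForm}
    (hI : Equiv φ (ST false false I x)) : KInvariantD2 false x φ I.degree := by
  intro Θ hΘ M₁ M₂ t u A₁₂ A₂₁ B₁₂ B₂₁ hasim a b hab ha β hβ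
  obtain ⟨-, h, h'⟩ := isKAsimD2_iff_halfKAsim.1 hasim
  have sat_iff (M : Model) (α : ℕ → M.U) : Sat M φ α ↔ Forces (M.reduct Θ) I (α x) :=
    (sat_reduct M hΘ α).symm.trans
      ((hI (M.reduct Θ) α).trans (sat_ST_iff_forces (M.reduct Θ) I x α))
  have hIa : Forces (M₁.reduct Θ) I a := (sat_iff M₁ fun _ => a).1 (ha _ rfl)
  have hIb : Forces (M₂.reduct Θ) I b :=
    h.reduct.forces h'.reduct (as := []) (bs := []) hab (by simp) hIa
  exact (sat_iff M₂ β).2 (hβ ▸ hIb)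

end HalfKAsim

section Preserves

/-- Every formula of `L` forced at `a` is forced at `b`: inclusion of types relative to `L`. -/
def Preserves (L : List MForm) {N P : Model} (a : N.U) (b : P.U) : Prop :=
  ∀ I ∈ L, Forces N I a → Forces P I b

theorem Preserves.mono {L L' : List MForm} {N P : Model} {a : N.U} {b : P.U}
    (h : Preserves L' a b) (hL : L ⊆ L') : Preserves L a b :=
  fun I hI => h I (hL hI)

/-- The conjunctions of sublists of `L`; up to equivalence, all conjunctions of its members. -/
def conjs (L : List MForm) : List MForm :=
  L.sublists.map .conjList

/-- The disjunctions of sublists of `L`; up to equivalence, all disjunctions of its members. -/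
def disjs (L : List MForm) : List MForm :=
  L.sublists.map .disjList

theorem conjList_filter_mem_conjs (p : MForm → Bool) (L : List MForm) :
    .conjList (L.filter p) ∈ conjs L :=
  List.mem_map_of_mem (List.mem_sublists.2 List.filter_sublist)

theorem disjList_filter_mem_disjs (p : MForm → Bool) (L : List MForm) :
    .disjList (L.filter p) ∈ disjs L :=
  List.mem_map_of_mem (List.mem_sublists.2 List.filter_sublist)

variable (L : List MForm) {M N P : Model}

open scoped Classical in
/-- The conjunction of the members of `L` forced at `a`; forcing it means having at least the
`L`-type of `a`. -/
noncomputable def posChar (a : M.U) : MForm :=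
  .conjList (L.filter fun I => Forces M I a)

open scoped Classical in
/-- The disjunction of the members of `L` not forced at `a`; refuting it means having at most the
`L`-type of `a`. -/
noncomputable def negChar (a : M.U) : MForm :=
  .disjList (L.filter fun I => ¬ Forces M I a)

theorem posChar_mem_conjs (a : M.U) : posChar L a ∈ conjs L :=
  conjList_filter_mem_conjs _ L

theorem negChar_mem_disjs (a : M.U) : negChar L a ∈ disjs L :=
  disjList_filter_mem_disjs _ L

variable {L}

theorem forces_posChar {a : M.U} {b : N.U} :
    Forces N (posChar L a) b ↔ Preserves L a b := by
  simp [posChar, forces_conjList, Preserves]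

theorem forces_negChar {a : M.U} {b : N.U} :
    Forces N (negChar L a) b ↔ ¬ Preserves L b a := by
  simp [negChar, forces_disjList, Preserves, and_assoc, and_comm]

theorem forces_posChar_self (a : M.U) : Forces M (posChar L a) a :=
  forces_posChar.2 fun _ _ => id

theorem not_forces_negChar_self (a : M.U) : ¬ Forces M (negChar L a) a :=
  fun h => forces_negChar.1 h fun _ _ => id

/-- One round of the construction of characteristic formulas: enough implications, boxes and
diamonds over `L` to carry the asimulation conditions down to `L`. -/
def charStep (L : List MForm) : List MForm :=
  L ++ (conjs L ×ˢ disjs L).map (fun IJ => .impl IJ.1 IJ.2) ++ (disjs L).map .box ++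
    (disjs (conjs L)).map .diam

theorem subset_charStep (L : List MForm) : L ⊆ charStep L := fun I hI => by
  simp [charStep, hI]

theorem impl_mem_charStep {I J : MForm} (hI : I ∈ conjs L) (hJ : J ∈ disjs L) :
    .impl I J ∈ charStep L := by
  simp [charStep, hI, hJ]

theorem box_mem_charStep {I : MForm} (hI : I ∈ disjs L) : .box I ∈ charStep L := by
  simp [charStep, hI]

theorem diam_mem_charStep {I : MForm} (hI : I ∈ disjs (conjs L)) : .diam I ∈ charStep L := by
  simp [charStep, hI]

/-- The forth condition for `R_◇` relative to `L`, which serves as the second component of the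
canonical asimulation. -/
def DiamPreserves (L : List MForm) {N P : Model} (a : N.U) (b : P.U) : Prop :=
  ∀ c, N.relDiam a c → ∃ d, P.relDiam b d ∧ Preserves L c d

theorem Preserves.exists_rel {a : N.U} {b d : P.U} (h : Preserves (charStep L) a b)
    (hbd : P.rel b d) : ∃ c, N.rel a c ∧ Preserves L c d ∧ Preserves L d c := by
  have hb : ¬ Forces P (.impl (posChar L d) (negChar L d)) b := fun hb =>
    not_forces_negChar_self d (hb d hbd (forces_posChar_self d))
  have ha := mt (h _ (impl_mem_charStep (posChar_mem_conjs L d) (negChar_mem_disjs L d))) hb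
  simp only [Forces, not_forall, forces_posChar, forces_negChar, not_not] at ha
  obtain ⟨c, hac, hdc, hcd⟩ := ha
  exact ⟨c, hac, hcd, hdc⟩

theorem Preserves.exists_rel_relBox {a : N.U} {b d f : P.U} (h : Preserves (charStep L) a b)
    (hbd : P.rel b d) (hdf : P.relBox d f) :
    ∃ c e, N.rel a c ∧ N.relBox c e ∧ Preserves L e f := by
  have hb : ¬ Forces P (.box (negChar L f)) b := fun hb =>
    not_forces_negChar_self f (hb d hbd f hdf)
  have ha := mt (h _ (box_mem_charStep (negChar_mem_disjs L f))) hb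
  simp only [Forces, not_forall, forces_negChar, not_not] at ha
  obtain ⟨c, hac, e, hce, hef⟩ := ha
  exact ⟨c, e, hac, hce, hef⟩

open scoped Classical in
theorem Preserves.exists_rel_diamPreserves {a : N.U} {b d : P.U}
    (h : Preserves (charStep L) a b) (hbd : P.rel b d) :
    ∃ c, N.rel a c ∧ DiamPreserves L c d := by
  let D : MForm := .disjList
    ((conjs L).filter fun J => ∀ f, P.relDiam d f → ¬ Forces P J f)
  have forces_D {M : Model} (e : M.U) : Forces M D e ↔
      ∃ J ∈ conjs L, (∀ f, P.relDiam d f → ¬ Forces P J f) ∧ Forces M J e := by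
    simp [D, forces_disjList, and_assoc]
  have hb : ¬ Forces P (.diam D) b := fun hb => by
    obtain ⟨f, hdf, hf⟩ := hb d hbd
    obtain ⟨J, -, hJ, hJf⟩ := (forces_D f).1 hf
    exact hJ f hdf hJf
  have ha := mt (h _ (diam_mem_charStep (disjList_filter_mem_disjs _ _))) hb
  simp only [Forces, not_forall, not_exists, not_and] at ha
  obtain ⟨c, hac, hc⟩ := ha
  refine ⟨c, hac, fun e hce => ?_⟩
  by_contra! he
  exact hc e hce ((forces_D e).2 ⟨posChar L e, posChar_mem_conjs L e,
    fun f hdf hf => he f hdf (forces_posChar.1 hf), forces_posChar_self e⟩)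

open scoped Classical in
theorem exists_equiv_ST_of_preserves {x : ℕ} {φ : FOForm}
    (hφ : ∀ {M N : Model} {α : ℕ → M.U} {β : ℕ → N.U},
      Preserves L (α x) (β x) → Sat M φ α → Sat N φ β) :
    ∃ I : MForm, Equiv φ (ST false false I x) := by
  -- `φ` is the disjunction of the finite conjunctions over `L` that entail it.
  refine ⟨.disjList ((conjs L).filter fun J =>
    ∀ (N : Model) (β : ℕ → N.U), Forces N J (β x) → Sat N φ β), fun M α => ?_⟩
  simp only [sat_ST_iff_forces, forces_disjList, List.mem_filter, decide_eq_true_eq]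
  constructor
  · intro hα
    exact ⟨posChar L (α x), ⟨posChar_mem_conjs L _, fun N β hβ => hφ (forces_posChar.1 hβ) hα⟩,
      forces_posChar_self _⟩
  · rintro ⟨J, ⟨-, hJ⟩, hJα⟩
    exact hJ M α hJα

end Preserves

section CanonicalAsimulation

/-- The characteristic formulas over the letters in `S` after `l` rounds. -/
noncomputable def charFormulas (S : Finset ℕ) : ℕ → List MForm
  | 0 => S.toList.map .prop
  | l + 1 => charStep (charFormulas S l)

theorem charFormulas_subset (S : Finset ℕ) {l l' : ℕ} (h : l ≤ l') :
    charFormulas S l ⊆ charFormulas S l' := by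
  induction l', h using Nat.le_induction with
  | base => exact List.Subset.refl _
  | succ l' _ ih => exact List.Subset.trans ih (subset_charStep _)

theorem prop_mem_charFormulas {S : Finset ℕ} {n : ℕ} (hn : n ∈ S) (l : ℕ) :
    .prop n ∈ charFormulas S l :=
  charFormulas_subset S (Nat.zero_le l) (List.mem_map_of_mem (Finset.mem_toList.2 hn))

/-- The relation between tuples of equal length `m + 1` given by `r m` on their last entries. -/
def LastRel {U V : Type*} (r : ℕ → U → V → Prop) (as : List U) (bs : List V) : Prop :=
  as.length = bs.length ∧ ∃ a ∈ as.getLast?, ∃ b ∈ bs.getLast?, r (as.length - 1) a b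

theorem lastRel_concat {U V : Type*} {r : ℕ → U → V → Prop} {as : List U} {bs : List V} {a : U}
    {b : V} :
    LastRel r (as ++ [a]) (bs ++ [b]) ↔ as.length = bs.length ∧ r as.length a b := by
  simp [LastRel]

theorem lastRel_append_pair {U V : Type*} {r : ℕ → U → V → Prop} {as : List U} {bs : List V}
    {a c : U} {b d : V} :
    LastRel r (as ++ [a, c]) (bs ++ [b, d]) ↔
      as.length = bs.length ∧ r (as.length + 1) c d := by
  simp [LastRel]

theorem lastRel_append_triple {U V : Type*} {r : ℕ → U → V → Prop} {as : List U} {bs : List V}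
    {a c e : U} {b d f : V} :
    LastRel r (as ++ [a, c, e]) (bs ++ [b, d, f]) ↔
      as.length = bs.length ∧ r (as.length + 2) e f := by
  simp [LastRel]

theorem typeCond_lastRel {N P : Model} (r : ℕ → N.U → P.U → Prop) :
    TypeCond N P (LastRel r) := by
  rintro as bs ⟨hlen, a, ha, -⟩
  exact ⟨List.ne_nil_of_mem (List.mem_of_getLast? ha), hlen⟩

/-- The first component of the canonical k-asimulation: after `m` moves, `k - m` rounds of
characteristic formulas are preserved. -/
def canonicalA (S : Finset ℕ) (k : ℕ) (N P : Model) : List N.U → List P.U → Prop :=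
  LastRel fun m => Preserves (charFormulas S (k - m))

/-- The second component of the canonical k-asimulation. -/
def canonicalB (S : Finset ℕ) (k : ℕ) (N P : Model) : List N.U → List P.U → Prop :=
  LastRel fun m => DiamPreserves (charFormulas S (k - m))

theorem Preserves.charStep_of_lt {S : Finset ℕ} {k m : ℕ} {N P : Model} {a : N.U} {b : P.U}
    (h : Preserves (charFormulas S (k - m)) a b) (hm : m < k) :
    Preserves (charStep (charFormulas S (k - (m + 1)))) a b := by
  rwa [show k - m = k - (m + 1) + 1 by lia, charFormulas] at h

theorem halfKAsim_canonical (S : Finset ℕ) (k : ℕ) (N P : Model) :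
    HalfKAsim S k N P (canonicalA S k N P) (canonicalA S k P N) (canonicalB S k N P) where
  type_fst := typeCond_lastRel _
  type_snd := typeCond_lastRel _
  base as bs a b hA n hn := (lastRel_concat.1 hA).2 _ (prop_mem_charFormulas hn _)
  step as bs a b d hA hbd hm := by
    obtain ⟨hlen, h⟩ := lastRel_concat.1 hA
    obtain ⟨c, hac, hcd, hdc⟩ := (h.charStep_of_lt hm).exists_rel hbd
    exact ⟨c, hac, lastRel_append_pair.2 ⟨hlen, hcd⟩,
      lastRel_append_pair.2 ⟨hlen.symm, hlen ▸ hdc⟩⟩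
  box as bs a b d f hA hbd hdf hm := by
    obtain ⟨hlen, h⟩ := lastRel_concat.1 hA
    obtain ⟨c, e, hac, hce, hef⟩ :=
      (h.charStep_of_lt (Nat.lt_of_succ_lt hm)).exists_rel_relBox hbd hdf
    exact ⟨c, e, hac, hce,
      lastRel_append_triple.2 ⟨hlen, hef.mono (charFormulas_subset S (by lia))⟩⟩
  diam_rel as bs a b d hA hbd hm := by
    obtain ⟨hlen, h⟩ := lastRel_concat.1 hA
    obtain ⟨c, hac, hcd⟩ :=
      (h.charStep_of_lt (Nat.lt_of_succ_lt hm)).exists_rel_diamPreserves hbd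
    exact ⟨c, hac, lastRel_append_pair.2 ⟨hlen, hcd⟩⟩
  diam_relDiam as bs a c b hB hac _ := by
    obtain ⟨hlen, h⟩ := lastRel_concat.1 hB
    obtain ⟨d, hbd, hcd⟩ := h c hac
    exact ⟨d, hbd,
      lastRel_append_pair.2 ⟨hlen, hcd.mono (charFormulas_subset S (by lia))⟩⟩

theorem isKAsimD2_canonical {S : Finset ℕ} {k : ℕ} {M₁ M₂ : Model} {t : M₁.U} {u : M₂.U}
    (h : Preserves (charFormulas S k) t u) :
    IsKAsimD2 false S M₁ M₂ t u k (canonicalA S k M₁ M₂) (canonicalA S k M₂ M₁)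
      (canonicalB S k M₁ M₂) (canonicalB S k M₂ M₁) :=
  isKAsimD2_iff_halfKAsim.2 ⟨(lastRel_concat (as := []) (bs := [])).2 ⟨rfl, h⟩,
    halfKAsim_canonical S k M₁ M₂, halfKAsim_canonical S k M₂ M₁⟩

theorem KInvariantD2.sat_of_preserves {x k : ℕ} {φ : FOForm} (hφ : KInvariantD2 false x φ k)
    (hfv : φ.freeVars ⊆ {x}) {M N : Model} {α : ℕ → M.U} {β : ℕ → N.U}
    (h : Preserves (charFormulas φ.predLetters k) (α x) (β x)) (hα : Sat M φ α) : Sat N φ β := by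
  have hasim := isKAsimD2_canonical h
  exact (satAt_iff_sat hfv N β).1 <| hφ _ subset_rfl M N _ _ _ _ _ _ hasim (α x) (β x)
    (isKAsimD2_iff_halfKAsim.1 hasim).1 ((satAt_iff_sat hfv M α).2 hα)

end CanonicalAsimulation

/-- **Theorem 1, case (i,j) = (2,2).**  φ(x) is logically equivalent to the
(2,2)-standard x-translation of a modal intuitionistic formula iff there is a
k ∈ ℕ such that φ(x) is invariant with respect to (2,2)-modal k-asimulations. -/
theorem statement_0 (x : ℕ) (φ : FOForm) (hfv : φ.freeVars ⊆ {x}) :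
    (∃ I : MForm, Equiv φ (ST false false I x)) ↔
    (∃ k : ℕ, KInvariantD2 false x φ k) := by
  constructor
  · rintro ⟨I, hI⟩
    exact ⟨I.degree, kInvariantD2_of_equiv_ST hI⟩
  · rintro ⟨k, hk⟩
    exact exists_equiv_ST_of_preserves (hk.sat_of_preserves hfv)

end ModalIntAsim
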